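/- Let G be a finite simple graph with n vertices and e edges, minimum degree δ ≥ 1, maximum degree Δ, and independence number β. Then Inv(G) ≥ (n − β)/Δ + (1/(β·Δ³))·( 2β·(β·δ² + e²/(n − β)) − e² − 2β·(n − β)·Δ² ), with equality if and only if G is a regular balanced bipartite graph. -/

import Mathlib

open Finset

/-- The first Zagreb index of a graph: the sum of the squares of the vertex degrees. -/
def zagreb1 {V : Type*} [Fintype V] (G : SimpleGraph V) [DecidableRel G.Adj] : ℝ :=
  ∑ u, (G.degree u : ℝ) ^ 2

/-- The forgotten topological index of a graph: the sum of the cubes of the vertex degrees. -/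
def forgottenIndex {V : Type*} [Fintype V] (G : SimpleGraph V) [DecidableRel G.Adj] : ℝ :=
  ∑ u, (G.degree u : ℝ) ^ 3

/-- The inverse degree of a graph: the sum of the reciprocals of the vertex degrees. -/
noncomputable def invDegree {V : Type*} [Fintype V] (G : SimpleGraph V) [DecidableRel G.Adj] : ℝ :=
  ∑ u, 1 / (G.degree u : ℝ)

/-- The independence number of a graph: the largest cardinality of a set of pairwise
nonadjacent vertices. -/
noncomputable def indepNum {V : Type*} [Fintype V] (G : SimpleGraph V) : ℕ :=
  sSup {k | ∃ s : Finset V, s.card = k ∧ ∀ u ∈ s, ∀ v ∈ s, ¬ G.Adj u v}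

/-- A graph is a regular balanced bipartite graph if its vertices can be partitioned into
two parts of equal size with every edge joining the two parts, and all vertices have the
same degree. -/
def IsRegularBalancedBipartite {V : Type*} [Fintype V] (G : SimpleGraph V) [DecidableRel G.Adj] : Prop :=
  ∃ (A : Finset V) (r : ℕ), 2 * A.card = Fintype.card V ∧
    (∀ u v, G.Adj u v → (u ∈ A ↔ v ∉ A)) ∧ G.IsRegularOfDegree r

/-- A graph is `k`-connected if it has more than `k` vertices and removing any set of
fewer than `k` vertices leaves a connected graph. -/
def IsKConnected {V : Type*} [Fintype V] (G : SimpleGraph V) (k : ℕ) : Prop :=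
  k < Fintype.card V ∧
    ∀ S : Finset V, S.card < k → (G.induce (↑S : Set V)ᶜ).Connected

/-- A graph is traceable if it has a Hamiltonian path. -/
def IsTraceable {V : Type*} [DecidableEq V] (G : SimpleGraph V) : Prop :=
  ∃ (u v : V) (p : G.Walk u v), p.IsHamiltonian

/-!
For an independent set of `b` vertices, the degree sum counts the edges meeting it, so it is at most
`e`, and the degree sum over the complement is at least `e`; thus `b δ ≤ e ≤ (n - b) Δ`.
The bound is affine in `e²`. At `e = 0` it lies strictly below `n / Δ`, and at `e = (n - b) Δ` it is
at most `n / Δ`, with equality only for `δ = Δ` and `2 b = n`; hence it is at most `n / Δ`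
throughout, and `n / Δ ≤ Inv(G)` termwise. In a regular graph an independent set of `n / 2` vertices
meets `n Δ / 2 = e` edges, which makes it one side of a bipartition.
-/

section LowerBound

/-- The lower bound for the inverse degree of a graph with minimum degree `d`, maximum degree `D`
and `e` edges that is attached to an independent set of `b` vertices with `m` vertices outside
it. -/
noncomputable def invDegreeBound (b m d D e : ℝ) : ℝ :=
  m / D + (1 / (b * D ^ 3)) * (2 * b * (b * d ^ 2 + e ^ 2 / m) - e ^ 2 - 2 * b * m * D ^ 2)

variable {b m d D e : ℝ}

theorem mul_sub_invDegreeBound_eq_interpolation (x : ℝ) :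
    (m * D) ^ 2 * (x - invDegreeBound b m d D e) =
      ((m * D) ^ 2 - e ^ 2) * (x - invDegreeBound b m d D 0) +
        e ^ 2 * (x - invDegreeBound b m d D (m * D)) := by
  simp only [invDegreeBound]
  ring

theorem invDegreeBound_zero_lt (hb : 0 < b) (hd : 0 ≤ d) (hD : 0 < D) (hdD : d ≤ D)
    (hbm : b * d ≤ m * D) : invDegreeBound b m d D 0 < (b + m) / D := by
  have h : b * d ^ 2 ≤ m * D ^ 2 :=
    calc b * d ^ 2 = b * d * d := by ring
      _ ≤ m * D * D := mul_le_mul hbm hdD hd ((by positivity : 0 ≤ b * d).trans hbm)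
      _ = m * D ^ 2 := by ring
  have hgap : (b + m) / D - invDegreeBound b m d D 0 =
      (b * D ^ 2 + 2 * (m * D ^ 2 - b * d ^ 2)) / D ^ 3 := by
    rw [invDegreeBound]
    field_simp
    ring
  have := sub_nonneg.2 h
  rw [← sub_pos, hgap]
  positivity

theorem sub_invDegreeBound_mul (hb : b ≠ 0) (hD : D ≠ 0) :
    (b + m) / D - invDegreeBound b m d D (m * D) =
      (b ^ 2 * (D ^ 2 - d ^ 2) + ((m * D) ^ 2 - (b * d) ^ 2)) / (b * D ^ 3) := by
  rw [invDegreeBound]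
  field_simp
  ring

theorem invDegreeBound_mul_le (hb : 0 < b) (hd : 0 ≤ d) (hD : 0 < D) (hdD : d ≤ D)
    (hbm : b * d ≤ m * D) : invDegreeBound b m d D (m * D) ≤ (b + m) / D := by
  have h₁ : 0 ≤ D ^ 2 - d ^ 2 := sub_nonneg.2 (by gcongr)
  have h₂ : 0 ≤ (m * D) ^ 2 - (b * d) ^ 2 := sub_nonneg.2 (by gcongr)
  rw [← sub_nonneg, sub_invDegreeBound_mul hb.ne' hD.ne']
  positivity

theorem invDegreeBound_mul_eq_iff (hb : 0 < b) (hd : 0 ≤ d) (hD : 0 < D) (hdD : d ≤ D)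
    (hbm : b * d ≤ m * D) :
    invDegreeBound b m d D (m * D) = (b + m) / D ↔ d = D ∧ b = m := by
  have h₁ : 0 ≤ D ^ 2 - d ^ 2 := sub_nonneg.2 (by gcongr)
  have h₂ : 0 ≤ (m * D) ^ 2 - (b * d) ^ 2 := sub_nonneg.2 (by gcongr)
  have hbd : 0 ≤ b * d := by positivity
  rw [eq_comm, ← sub_eq_zero, sub_invDegreeBound_mul hb.ne' hD.ne', div_eq_zero_iff,
    or_iff_left (by positivity), add_eq_zero_iff_of_nonneg (by positivity) h₂,
    mul_eq_zero_iff_left (by positivity), sub_eq_zero, sub_eq_zero, sq_eq_sq₀ hD.le hd,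
    sq_eq_sq₀ (hbd.trans hbm) hbd, eq_comm (a := D)]
  refine and_congr_right fun h ↦ ?_
  rw [h, mul_left_inj' hD.ne', eq_comm]

theorem invDegreeBound_le (hb : 0 < b) (hm : 0 < m) (hd : 0 ≤ d) (hD : 0 < D) (hdD : d ≤ D)
    (hbm : b * d ≤ m * D) (he : 0 ≤ e) (hem : e ≤ m * D) :
    invDegreeBound b m d D e ≤ (b + m) / D := by
  have h₀ := sub_nonneg.2 (invDegreeBound_zero_lt hb hd hD hdD hbm).le
  have h₁ := sub_nonneg.2 (invDegreeBound_mul_le hb hd hD hdD hbm)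
  have h₂ : 0 ≤ (m * D) ^ 2 - e ^ 2 := sub_nonneg.2 (by gcongr)
  refine sub_nonneg.1 (nonneg_of_mul_nonneg_right ?_ (by positivity : 0 < (m * D) ^ 2))
  rw [mul_sub_invDegreeBound_eq_interpolation]
  positivity

theorem invDegreeBound_eq_iff (hb : 0 < b) (hd : 0 ≤ d) (hD : 0 < D) (hdD : d ≤ D)
    (hbm : b * d ≤ m * D) (he : 0 ≤ e) (hem : e ≤ m * D) :
    invDegreeBound b m d D e = (b + m) / D ↔ e = m * D ∧ d = D ∧ b = m := by
  rw [← invDegreeBound_mul_eq_iff hb hd hD hdD hbm]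
  refine ⟨fun h ↦ ?_, fun ⟨he_max, h⟩ ↦ he_max ▸ h⟩
  have he_max : e = m * D := by
    by_contra hne
    have hlt : 0 < (m * D) ^ 2 - e ^ 2 := sub_pos.2 (by gcongr; exact hem.lt_of_ne hne)
    have h₀ := sub_pos.2 (invDegreeBound_zero_lt hb hd hD hdD hbm)
    have h₁ := sub_nonneg.2 (invDegreeBound_mul_le hb hd hD hdD hbm)
    have hgap := mul_sub_invDegreeBound_eq_interpolation (b := b) (m := m) (d := d) (D := D)
      (e := e) ((b + m) / D)
    rw [h, sub_self, mul_zero] at hgap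
    exact hgap.not_lt (by positivity)
  exact ⟨he_max, he_max ▸ h⟩

end LowerBound

section Graph

variable {V : Type*} [Fintype V] {G : SimpleGraph V}

theorem indepNum_eq_simpleGraph_indepNum (G : SimpleGraph V) : indepNum G = G.indepNum := by
  have h (s : Finset V) : (∀ u ∈ s, ∀ v ∈ s, ¬ G.Adj u v) ↔ G.IsIndepSet s :=
    ⟨fun hs u hu v hv _ ↦ hs u hu v hv, fun hs u hu v hv huv ↦ hs hu hv huv.ne huv⟩
  simp only [indepNum, SimpleGraph.indepNum, SimpleGraph.isNIndepSet_iff, h, and_comm]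

theorem exists_nonempty_isIndepSet_card_eq_indepNum [Nonempty V] (G : SimpleGraph V) :
    ∃ s : Finset V, s.Nonempty ∧ G.IsIndepSet s ∧ #s = indepNum G := by
  obtain ⟨s, hs, hcard⟩ := G.exists_isNIndepSet_indepNum
  obtain ⟨v⟩ := ‹Nonempty V›
  have hpos : 1 ≤ G.indepNum :=
    SimpleGraph.IsIndepSet.card_le_indepNum (t := {v}) (by simp [SimpleGraph.IsIndepSet])
  exact ⟨s, card_pos.1 (hcard ▸ hpos), hs, hcard.trans (indepNum_eq_simpleGraph_indepNum G).symm⟩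

variable [DecidableRel G.Adj] {s : Finset V} {r : ℕ}

theorem nonempty_of_minDegree_pos (hδ : 0 < G.minDegree) : Nonempty V := by
  by_contra! hV
  simp at hδ

theorem card_div_maxDegree_le_invDegree (hδ : 0 < G.minDegree) :
    (Fintype.card V : ℝ) / G.maxDegree ≤ invDegree G := by
  have hle (v : V) : 1 / (G.maxDegree : ℝ) ≤ 1 / G.degree v := by
    have hpos : 0 < G.degree v := hδ.trans_le (G.minDegree_le_degree v)
    have := G.degree_le_maxDegree v
    gcongr
  simpa [invDegree, div_eq_mul_inv] using sum_le_sum fun v (_ : v ∈ univ) ↦ hle v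

theorem invDegree_of_isRegularOfDegree (hr : G.IsRegularOfDegree r) :
    invDegree G = (Fintype.card V : ℝ) / r := by
  simp [invDegree, hr.degree_eq, div_eq_mul_inv]

theorem sum_degree_eq_card_filter_edgeFinset [DecidableEq V] (hs : G.IsIndepSet s) :
    ∑ u ∈ s, G.degree u = #{x ∈ G.edgeFinset | ∃ u ∈ s, u ∈ x} := by
  have hdisj : (s : Set V).PairwiseDisjoint fun u ↦ G.incidenceFinset u := by
    refine fun u hu v hv huv ↦ disjoint_left.2 fun x hxu hxv ↦ hs hu hv huv ?_
    rw [SimpleGraph.mem_incidenceFinset] at hxu hxv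
    exact G.adj_of_mem_incidenceSet huv hxu hxv
  have hunion : {x ∈ G.edgeFinset | ∃ u ∈ s, u ∈ x} = s.biUnion fun u ↦ G.incidenceFinset u := by
    ext x
    simp only [mem_filter, SimpleGraph.mem_edgeFinset, mem_biUnion,
      SimpleGraph.mem_incidenceFinset, SimpleGraph.incidenceSet, Set.mem_sep_iff]
    tauto
  rw [hunion, card_biUnion hdisj]
  simp only [SimpleGraph.card_incidenceFinset_eq_degree]

theorem sum_degree_le_card_edgeFinset (hs : G.IsIndepSet s) :
    ∑ u ∈ s, G.degree u ≤ #G.edgeFinset := by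
  classical exact (sum_degree_eq_card_filter_edgeFinset hs).trans_le (card_filter_le _ _)

theorem isVertexCover_of_sum_degree_eq (hs : G.IsIndepSet s)
    (h : ∑ u ∈ s, G.degree u = #G.edgeFinset) : G.IsVertexCover s := by
  classical
  intro u v huv
  rw [sum_degree_eq_card_filter_edgeFinset hs, card_filter_eq_iff] at h
  simpa [and_or_left, exists_or] using h s(u, v) (by simpa using huv)

theorem card_mul_minDegree_le_card_edgeFinset (hs : G.IsIndepSet s) :
    #s * G.minDegree ≤ #G.edgeFinset :=
  (card_nsmul_le_sum s _ _ fun u _ ↦ G.minDegree_le_degree u).trans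
    (sum_degree_le_card_edgeFinset hs)

theorem card_edgeFinset_le_card_sub_mul_maxDegree (hs : G.IsIndepSet s) :
    (#G.edgeFinset : ℝ) ≤ (Fintype.card V - #s) * G.maxDegree := by
  classical
  have hsum : ∑ u ∈ s, G.degree u + ∑ u ∈ sᶜ, G.degree u = 2 * #G.edgeFinset := by
    rw [sum_add_sum_compl, G.sum_degrees_eq_twice_card_edges]
  have hle := sum_degree_le_card_edgeFinset hs
  have hcompl : ∑ u ∈ sᶜ, G.degree u ≤ #sᶜ * G.maxDegree :=
    sum_le_card_nsmul sᶜ _ _ fun u _ ↦ G.degree_le_maxDegree u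
  rw [← Nat.cast_sub s.card_le_univ, ← card_compl]
  exact_mod_cast (by lia : #G.edgeFinset ≤ #sᶜ * G.maxDegree)

theorem card_lt_card_of_isIndepSet (hδ : 0 < G.minDegree) (hs : G.IsIndepSet s) :
    #s < Fintype.card V := by
  obtain ⟨v⟩ := nonempty_of_minDegree_pos hδ
  obtain ⟨w, hvw⟩ := (G.degree_pos_iff_exists_adj v).1 (hδ.trans_le (G.minDegree_le_degree v))
  by_cases hv : v ∈ s
  · exact card_lt_univ_of_notMem fun hw ↦ hs hv hw hvw.ne hvw
  · exact card_lt_univ_of_notMem hv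

theorem two_mul_card_edgeFinset_of_isRegularOfDegree (hr : G.IsRegularOfDegree r) :
    2 * #G.edgeFinset = Fintype.card V * r := by
  simp [← G.sum_degrees_eq_twice_card_edges, hr.degree_eq]

theorem two_mul_card_le_of_isRegularOfDegree (hr : G.IsRegularOfDegree r) (hr_pos : 0 < r)
    (hs : G.IsIndepSet s) : 2 * #s ≤ Fintype.card V := by
  have hle : #s * r ≤ #G.edgeFinset := by
    simpa [hr.degree_eq] using sum_degree_le_card_edgeFinset hs
  refine Nat.le_of_mul_le_mul_right ?_ hr_pos
  rw [← two_mul_card_edgeFinset_of_isRegularOfDegree hr, mul_assoc]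
  gcongr

theorem isVertexCover_of_isRegularOfDegree (hr : G.IsRegularOfDegree r) (hs : G.IsIndepSet s)
    (hcard : 2 * #s = Fintype.card V) : G.IsVertexCover s := by
  refine isVertexCover_of_sum_degree_eq hs ?_
  have hedge := two_mul_card_edgeFinset_of_isRegularOfDegree hr
  simp only [hr.degree_eq, sum_const, smul_eq_mul]
  rw [← hcard] at hedge
  lia

theorem isRegularBalancedBipartite_iff (hδ : 0 < G.minDegree) :
    IsRegularBalancedBipartite G ↔
      (∃ r, G.IsRegularOfDegree r) ∧ 2 * indepNum G = Fintype.card V := by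
  have := nonempty_of_minDegree_pos hδ
  obtain ⟨s, -, hs, hs_card⟩ := exists_nonempty_isIndepSet_card_eq_indepNum G
  constructor
  · rintro ⟨A, r, hA, hbip, hr⟩
    have hA_indep : G.IsIndepSet A := fun u hu v hv _ huv ↦ (hbip u v huv).1 hu hv
    have hge : #A ≤ indepNum G :=
      hA_indep.card_le_indepNum.trans_eq (indepNum_eq_simpleGraph_indepNum G).symm
    have hle := two_mul_card_le_of_isRegularOfDegree hr (hr.minDegree_eq ▸ hδ) hs
    exact ⟨⟨r, hr⟩, by lia⟩
  · rintro ⟨⟨r, hr⟩, hcard⟩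
    rw [← hs_card] at hcard
    have hcover := isVertexCover_of_isRegularOfDegree hr hs hcard
    exact ⟨s, r, hcard, fun u v huv ↦
      ⟨fun hu hv ↦ hs hu hv huv.ne huv, (hcover huv).resolve_right⟩, hr⟩

theorem isRegularOfDegree_of_minDegree_eq_maxDegree (h : G.minDegree = G.maxDegree) :
    G.IsRegularOfDegree G.maxDegree :=
  fun v ↦ (G.degree_le_maxDegree v).antisymm (h ▸ G.minDegree_le_degree v)

theorem invDegreeBound_le_card_div_maxDegree_and_eq_iff (hδ : 0 < G.minDegree) (hne : s.Nonempty)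
    (hs : G.IsIndepSet s) :
    invDegreeBound #s (Fintype.card V - #s) G.minDegree G.maxDegree #G.edgeFinset ≤
      Fintype.card V / G.maxDegree ∧
    (invDegreeBound #s (Fintype.card V - #s) G.minDegree G.maxDegree #G.edgeFinset =
        Fintype.card V / G.maxDegree ↔
      (#G.edgeFinset : ℝ) = (Fintype.card V - #s) * G.maxDegree ∧
        (G.minDegree : ℝ) = G.maxDegree ∧ (#s : ℝ) = Fintype.card V - #s) := by
  have hb : (0 : ℝ) < #s := mod_cast hne.card_pos
  have hm : (0 : ℝ) < Fintype.card V - #s :=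
    sub_pos.2 (mod_cast card_lt_card_of_isIndepSet hδ hs)
  have hδΔ : (G.minDegree : ℝ) ≤ G.maxDegree := mod_cast G.minDegree_le_maxDegree
  have hΔ : (0 : ℝ) < G.maxDegree := (Nat.cast_pos.2 hδ).trans_le hδΔ
  have hlow : (#s * G.minDegree : ℝ) ≤ #G.edgeFinset :=
    mod_cast card_mul_minDegree_le_card_edgeFinset hs
  have hupp := card_edgeFinset_le_card_sub_mul_maxDegree hs
  have hδ_nonneg : (0 : ℝ) ≤ G.minDegree := Nat.cast_nonneg _
  have he : (0 : ℝ) ≤ #G.edgeFinset := Nat.cast_nonneg _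
  have hle := invDegreeBound_le hb hm hδ_nonneg hΔ hδΔ (hlow.trans hupp) he hupp
  have heq_iff := invDegreeBound_eq_iff hb hδ_nonneg hΔ hδΔ (hlow.trans hupp) he hupp
  rw [add_sub_cancel] at hle heq_iff
  exact ⟨hle, heq_iff⟩

theorem stmt5_general (hδ : 0 < G.minDegree) (hne : s.Nonempty) (hs : G.IsIndepSet s) :
    invDegreeBound #s (Fintype.card V - #s) G.minDegree G.maxDegree #G.edgeFinset ≤ invDegree G ∧
    (invDegree G =
        invDegreeBound #s (Fintype.card V - #s) G.minDegree G.maxDegree #G.edgeFinset ↔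
      (∃ r, G.IsRegularOfDegree r) ∧ 2 * #s = Fintype.card V) := by
  have := nonempty_of_minDegree_pos hδ
  obtain ⟨hbound, heq_iff⟩ := invDegreeBound_le_card_div_maxDegree_and_eq_iff hδ hne hs
  have hinv := card_div_maxDegree_le_invDegree hδ
  refine ⟨hbound.trans hinv, fun h ↦ ?_, ?_⟩
  · obtain ⟨-, hδΔ, hs_card⟩ := heq_iff.1 (hbound.antisymm (h ▸ hinv))
    refine ⟨⟨_, isRegularOfDegree_of_minDegree_eq_maxDegree (mod_cast hδΔ)⟩, ?_⟩
    exact_mod_cast (by linarith : (2 * #s : ℝ) = Fintype.card V)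
  · rintro ⟨⟨r, hr⟩, hcard⟩
    have hedge : (2 * #G.edgeFinset : ℝ) = Fintype.card V * r :=
      mod_cast two_mul_card_edgeFinset_of_isRegularOfDegree hr
    have hn : (Fintype.card V : ℝ) = 2 * #s := mod_cast hcard.symm
    rw [invDegree_of_isRegularOfDegree hr, ← hr.maxDegree_eq, eq_comm, heq_iff, hr.maxDegree_eq,
      hr.minDegree_eq]
    rw [hn] at hedge ⊢
    exact ⟨by linarith, rfl, by ring⟩

end Graph

/-- For a graph `G` with `n` vertices, `e` edges, minimum degree `δ ≥ 1`, maximum degree `Δ`,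
and independence number `β`:
`Inv(G) ≥ (n − β)/Δ + (1/(βΔ³))(2β(βδ² + e²/(n − β)) − e² − 2β(n − β)Δ²)`, with equality iff
`G` is a regular balanced bipartite graph. -/
theorem stmt5 {V : Type*} [Fintype V] [DecidableEq V] (G : SimpleGraph V) [DecidableRel G.Adj]
    (hδ : 1 ≤ G.minDegree) :
    invDegree G ≥ ((Fintype.card V : ℝ) - indepNum G) / (G.maxDegree : ℝ)
        + (1 / ((indepNum G : ℝ) * (G.maxDegree : ℝ) ^ 3)) *
          (2 * (indepNum G : ℝ) * ((indepNum G : ℝ) * (G.minDegree : ℝ) ^ 2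
              + (G.edgeFinset.card : ℝ) ^ 2 / ((Fintype.card V : ℝ) - indepNum G))
            - (G.edgeFinset.card : ℝ) ^ 2
            - 2 * (indepNum G : ℝ) * ((Fintype.card V : ℝ) - indepNum G)
              * (G.maxDegree : ℝ) ^ 2) ∧
    (invDegree G = ((Fintype.card V : ℝ) - indepNum G) / (G.maxDegree : ℝ)
        + (1 / ((indepNum G : ℝ) * (G.maxDegree : ℝ) ^ 3)) *
          (2 * (indepNum G : ℝ) * ((indepNum G : ℝ) * (G.minDegree : ℝ) ^ 2
              + (G.edgeFinset.card : ℝ) ^ 2 / ((Fintype.card V : ℝ) - indepNum G))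
            - (G.edgeFinset.card : ℝ) ^ 2
            - 2 * (indepNum G : ℝ) * ((Fintype.card V : ℝ) - indepNum G)
              * (G.maxDegree : ℝ) ^ 2)
      ↔ IsRegularBalancedBipartite G) := by
  have := nonempty_of_minDegree_pos hδ
  obtain ⟨s, hne, hs, hcard⟩ := exists_nonempty_isIndepSet_card_eq_indepNum G
  rw [isRegularBalancedBipartite_iff hδ, ← hcard]
  exact stmt5_general hδ hne hs
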